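/- Let H be a weak Hopf algebra over a field k. Then the antipode S is an algebra antihomomorphism and a coalgebra antihomomorphism: S(xy) = S(y)S(x) for all x,y ∈ H, S(1) = 1, Σ (S(x))⁽¹⁾ ⊗ (S(x))⁽²⁾ = Σ S(x⁽²⁾) ⊗ S(x⁽¹⁾) for all x ∈ H, and ε(S(x)) = ε(x) for all x ∈ H. -/

import Mathlib

/-!
In any semigroup, an element `g` with `g f g = g` is determined by `f`, `f g` and `g f`
(`eq_of_weak_inverse`). The two main identities come from applying this in convolution algebras.

For `S(xy) = S(y)S(x)`, work in `Hom(H ⊗ H, H)` with `f` the multiplication. Both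
`x ⊗ y ↦ S(xy)` and `x ⊗ y ↦ S(y)S(x)` have products `ε_t(xy)` and `ε_s(xy)` with `f`: for the second,
`Σ x⁽¹⁾ ε_t(y) S(x⁽²⁾) = ε_t(x ε_t(y)) = ε_t(xy)`, because `Δ(x ε_t(y)) = Σ x⁽¹⁾ ε_t(y) ⊗ x⁽²⁾`, and
symmetrically on the other side. That it is reproduced by `g f g` follows since `ε_s(x)` and
`ε_t(y)` commute (`εs_mul_εt`), together with `S * ε_t = S = ε_s * S`.

For `Δ(S(x)) = Σ S(x⁽²⁾) ⊗ S(x⁽¹⁾)`, work dually in `Hom(H, H ⊗ H)` with `f = Δ`. The needed inputs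
are `Σ x⁽¹⁾ ⊗ ε_t(x⁽²⁾) = Σ 1⁽¹⁾x ⊗ 1⁽²⁾` (`map_id_εt_comul`), its mirror image, and
`Σ ε_s(y⁽¹⁾) ⊗ ε_t(y⁽²⁾) = Σ ε_s(y⁽²⁾) ⊗ ε_t(y⁽¹⁾)` (`map_εs_εt_comul`), the dual of the commutation
of `ε_s(x)` with `ε_t(y)`.

The statements about the unit and the counit are short direct computations.
-/

open scoped TensorProduct
open TensorProduct LinearMap

/-- A weak bialgebra over a field `k`: an algebra and coalgebra subject to the
weak compatibility axioms (WBA1)-(WBA3). -/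
class WeakBialgebra (k H : Type*) [Field k] [Ring H] [Algebra k H]
    extends Coalgebra k H where
  /-- (WBA1): `Δ(xy) = Δ(x)Δ(y)`. -/
  comul_mul : ∀ x y : H,
    Coalgebra.comul (R := k) (x * y) = Coalgebra.comul (R := k) x * Coalgebra.comul (R := k) y
  /-- (WBA2): `ε(xyz) = Σ ε(xy⁽¹⁾)ε(y⁽²⁾z)`. -/
  counit_mul_mul : ∀ x y z : H,
    Coalgebra.counit (R := k) (x * y * z) =
      TensorProduct.lid k k
        ((TensorProduct.map (Coalgebra.counit ∘ₗ LinearMap.mulLeft k x)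
            (Coalgebra.counit ∘ₗ LinearMap.mulRight k z))
          (Coalgebra.comul (R := k) y))
  /-- (WBA2'): `ε(xyz) = Σ ε(xy⁽²⁾)ε(y⁽¹⁾z)`. -/
  counit_mul_mul' : ∀ x y z : H,
    Coalgebra.counit (R := k) (x * y * z) =
      TensorProduct.lid k k
        ((TensorProduct.map (Coalgebra.counit ∘ₗ LinearMap.mulRight k z)
            (Coalgebra.counit ∘ₗ LinearMap.mulLeft k x))
          (Coalgebra.comul (R := k) y))
  /-- (WBA3): `((Δ⊗id)∘Δ)(1) = (Δ(1)⊗1)·(1⊗Δ(1))`. -/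
  comul_comul_one :
    (TensorProduct.map (Coalgebra.comul (R := k)) (LinearMap.id (M := H)))
        (Coalgebra.comul (R := k) (1 : H)) =
      (Coalgebra.comul (R := k) (1 : H) ⊗ₜ[k] (1 : H)) *
        ((TensorProduct.assoc k H H H).symm ((1 : H) ⊗ₜ[k] Coalgebra.comul (R := k) (1 : H)))
  /-- (WBA3'): `((Δ⊗id)∘Δ)(1) = (1⊗Δ(1))·(Δ(1)⊗1)`. -/
  comul_comul_one' :
    (TensorProduct.map (Coalgebra.comul (R := k)) (LinearMap.id (M := H)))
        (Coalgebra.comul (R := k) (1 : H)) =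
      ((TensorProduct.assoc k H H H).symm ((1 : H) ⊗ₜ[k] Coalgebra.comul (R := k) (1 : H))) *
        (Coalgebra.comul (R := k) (1 : H) ⊗ₜ[k] (1 : H))

variable (k H : Type*) [Field k] [Ring H] [Algebra k H]

/-- The target counital map `ε_t(x) = Σ ε(1⁽¹⁾x)·1⁽²⁾`. -/
noncomputable def εt [WeakBialgebra k H] : H →ₗ[k] H :=
  (TensorProduct.lid k H).toLinearMap ∘ₗ
    (LinearMap.rTensor H (Coalgebra.counit (R := k) (A := H))) ∘ₗ
    (LinearMap.mulLeft k (Coalgebra.comul (R := k) (1 : H))) ∘ₗ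
    ((TensorProduct.mk k H H).flip 1)

/-- The source counital map `ε_s(x) = Σ 1⁽¹⁾·ε(x1⁽²⁾)`. -/
noncomputable def εs [WeakBialgebra k H] : H →ₗ[k] H :=
  (TensorProduct.rid k H).toLinearMap ∘ₗ
    (LinearMap.lTensor H (Coalgebra.counit (R := k) (A := H))) ∘ₗ
    (LinearMap.mulRight k (Coalgebra.comul (R := k) (1 : H))) ∘ₗ
    (TensorProduct.mk k H H 1)

/-- The target base algebra `H_t = ε_t(H)`. -/
noncomputable def Ht [WeakBialgebra k H] : Submodule k H := LinearMap.range (εt k H)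

/-- The source base algebra `H_s = ε_s(H)`. -/
noncomputable def Hs [WeakBialgebra k H] : Submodule k H := LinearMap.range (εs k H)

/-- A weak Hopf algebra: a weak bialgebra with an antipode `S` satisfying
`Σ x⁽¹⁾S(x⁽²⁾) = ε_t(x)`, `Σ S(x⁽¹⁾)x⁽²⁾ = ε_s(x)` and `Σ S(x⁽¹⁾)x⁽²⁾S(x⁽³⁾) = S(x)`. -/
class WeakHopfAlgebra extends WeakBialgebra k H where
  antipode : H →ₗ[k] H
  mul_antipode : ∀ x : H,
    LinearMap.mul' k H ((LinearMap.lTensor H antipode) (Coalgebra.comul (R := k) x)) = εt k H x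
  antipode_mul : ∀ x : H,
    LinearMap.mul' k H ((LinearMap.rTensor H antipode) (Coalgebra.comul (R := k) x)) = εs k H x
  antipode_mul_antipode : ∀ x : H,
    LinearMap.mul' k H
      ((TensorProduct.map antipode (LinearMap.mul' k H ∘ₗ LinearMap.lTensor H antipode))
        ((LinearMap.lTensor H (Coalgebra.comul (R := k)))
          (Coalgebra.comul (R := k) x))) = antipode x

/-- The antipode of a weak Hopf algebra, as a linear map. -/
noncomputable def aS [WeakHopfAlgebra k H] : H →ₗ[k] H :=
  WeakHopfAlgebra.antipode (k := k) (H := H)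

section AntipodeProof

open Coalgebra WithConv

variable {k H}

/-! ### Counital maps of a weak bialgebra -/

section WeakBialgebra

variable [WeakBialgebra k H]

theorem εt_eq_sum {ι : Type*} (r : Repr k (1 : H) ι) (x : H) :
    εt k H x = ∑ i ∈ r.index, counit (R := k) (r.left i * x) • r.right i := by
  simp [εt, ← r.eq, Finset.sum_mul]

theorem εs_eq_sum {ι : Type*} (r : Repr k (1 : H) ι) (x : H) :
    εs k H x = ∑ i ∈ r.index, counit (R := k) (x * r.right i) • r.left i := by
  simp [εs, ← r.eq, Finset.mul_sum]

theorem one_mul_comul (x : H) : comul (R := k) (1 : H) * comul (R := k) x = comul x := by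
  rw [← WeakBialgebra.comul_mul, one_mul]

theorem comul_mul_one (x : H) : comul (R := k) x * comul (R := k) (1 : H) = comul x := by
  rw [← WeakBialgebra.comul_mul, mul_one]

/-- (WBA3') with a chosen expression `Δ(1) = Σ aᵢ ⊗ bᵢ` substituted for the factor `1 ⊗ Δ(1)`. -/
theorem sum_comul_left_tmul {ι : Type*} (r : Repr k (1 : H) ι) :
    ∑ i ∈ r.index, comul (R := k) (r.left i) ⊗ₜ[k] r.right i =
      ∑ i ∈ r.index, (((1 : H) ⊗ₜ[k] r.left i) * comul (R := k) (1 : H)) ⊗ₜ[k] r.right i := by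
  have h := WeakBialgebra.comul_comul_one' (k := k) (H := H)
  have e : (TensorProduct.assoc k H H H).symm ((1 : H) ⊗ₜ[k] comul (R := k) (1 : H)) =
      ∑ i ∈ r.index, ((1 : H) ⊗ₜ[k] r.left i) ⊗ₜ[k] r.right i := by
    simp [← r.eq, tmul_sum]
  rw [e, Finset.sum_mul] at h
  simp only [Algebra.TensorProduct.tmul_mul_tmul, mul_one] at h
  rw [← h]
  conv_rhs => rw [← r.eq]
  simp

/-- (WBA3) with a chosen expression `Δ(1) = Σ aᵢ ⊗ bᵢ` substituted for the factor `1 ⊗ Δ(1)`. -/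
theorem sum_comul_left_tmul' {ι : Type*} (r : Repr k (1 : H) ι) :
    ∑ i ∈ r.index, comul (R := k) (r.left i) ⊗ₜ[k] r.right i =
      ∑ i ∈ r.index, (comul (R := k) (1 : H) * ((1 : H) ⊗ₜ[k] r.left i)) ⊗ₜ[k] r.right i := by
  have h := WeakBialgebra.comul_comul_one (k := k) (H := H)
  have e : (TensorProduct.assoc k H H H).symm ((1 : H) ⊗ₜ[k] comul (R := k) (1 : H)) =
      ∑ i ∈ r.index, ((1 : H) ⊗ₜ[k] r.left i) ⊗ₜ[k] r.right i := by
    simp [← r.eq, tmul_sum]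
  rw [e, Finset.mul_sum] at h
  simp only [Algebra.TensorProduct.tmul_mul_tmul, one_mul] at h
  rw [← h]
  conv_rhs => rw [← r.eq]
  simp

/-- (WBA3'), reassociated, with a chosen expression `Δ(1) = Σ aᵢ ⊗ bᵢ` substituted for the factor
`Δ(1) ⊗ 1`. -/
theorem sum_left_tmul_comul {ι : Type*} (r : Repr k (1 : H) ι) :
    ∑ i ∈ r.index, r.left i ⊗ₜ[k] comul (R := k) (r.right i) =
      ∑ i ∈ r.index, r.left i ⊗ₜ[k] (comul (R := k) (1 : H) * (r.right i ⊗ₜ[k] (1 : H))) := by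
  have h := WeakBialgebra.comul_comul_one' (k := k) (H := H)
  apply_fun TensorProduct.assoc k H H H at h
  have e : (TensorProduct.map (comul (R := k)) (LinearMap.id (M := H))) =
    (comul (R := k) (A := H)).rTensor H := rfl
  rw [e, coassoc_apply] at h
  have h1 : (comul (R := k) (A := H)).lTensor H (comul (R := k) (1 : H)) =
      ∑ i ∈ r.index, r.left i ⊗ₜ[k] comul (R := k) (r.right i) := by
    conv_lhs => rw [← r.eq]
    simp
  rw [← h1, h]
  rw [← r.eq]
  simp [tmul_sum, sum_tmul, Finset.sum_mul, Finset.mul_sum]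

theorem counit_mul_εt (x y : H) : counit (R := k) (x * εt k H y) = counit (R := k) (x * y) := by
  have h := WeakBialgebra.counit_mul_mul' (k := k) x 1 y
  rw [mul_one] at h
  rw [h, εt_eq_sum (ℛ k (1 : H))]
  conv_rhs => rw [← (ℛ k (1 : H)).eq]
  simp [Finset.mul_sum]

theorem counit_εs_mul (x y : H) : counit (R := k) (εs k H x * y) = counit (R := k) (x * y) := by
  have h := WeakBialgebra.counit_mul_mul' (k := k) x 1 y
  rw [mul_one] at h
  rw [h, εs_eq_sum (ℛ k (1 : H))]
  conv_rhs => rw [← (ℛ k (1 : H)).eq]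
  simp [Finset.sum_mul, mul_comm]

theorem εt_mul_εt (x y : H) : εt k H (x * εt k H y) = εt k H (x * y) := by
  simp only [εt_eq_sum (ℛ k (1 : H)) (x * _), ← mul_assoc, counit_mul_εt]

theorem εs_εs_mul (x y : H) : εs k H (εs k H x * y) = εs k H (x * y) := by
  simp only [εs_eq_sum (ℛ k (1 : H)) (_ * y), mul_assoc, counit_εs_mul]

theorem εt_one : εt k H 1 = 1 := by
  rw [εt_eq_sum (ℛ k (1 : H))]
  simpa using sum_counit_smul (ℛ k (1 : H))

theorem εs_one : εs k H 1 = 1 := by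
  rw [εs_eq_sum (ℛ k (1 : H))]
  have := congrArg (TensorProduct.rid k H) (sum_tmul_counit_eq (ℛ k (1 : H)))
  simpa only [map_sum, TensorProduct.rid_tmul, one_mul, one_smul] using this

theorem comul_εt (y : H) :
    comul (R := k) (εt k H y) = comul (R := k) (1 : H) * (εt k H y ⊗ₜ[k] (1 : H)) := by
  have h := congrArg ((TensorProduct.lid k (H ⊗[k] H)).toLinearMap ∘ₗ
    (counit ∘ₗ LinearMap.mulRight k y).rTensor (H ⊗[k] H)) (sum_left_tmul_comul (ℛ k (1 : H)))
  rw [εt_eq_sum (ℛ k (1 : H))]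
  simpa [sum_tmul, Finset.mul_sum, ← smul_tmul'] using h

theorem comul_εs (x : H) :
    comul (R := k) (εs k H x) = ((1 : H) ⊗ₜ[k] εs k H x) * comul (R := k) (1 : H) := by
  have h := congrArg ((TensorProduct.rid k (H ⊗[k] H)).toLinearMap ∘ₗ
    (counit ∘ₗ LinearMap.mulLeft k x).lTensor (H ⊗[k] H)) (sum_comul_left_tmul (ℛ k (1 : H)))
  rw [εs_eq_sum (ℛ k (1 : H))]
  simpa [tmul_sum, Finset.sum_mul] using h

theorem comul_mul_εt (x y : H) :
    comul (R := k) (x * εt k H y) = comul (R := k) x * (εt k H y ⊗ₜ[k] (1 : H)) := by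
  rw [WeakBialgebra.comul_mul, comul_εt, ← mul_assoc, comul_mul_one]

theorem comul_εs_mul (x y : H) :
    comul (R := k) (εs k H x * y) = ((1 : H) ⊗ₜ[k] εs k H x) * comul (R := k) y := by
  rw [WeakBialgebra.comul_mul, comul_εs, mul_assoc, one_mul_comul]

/-- Elements of the source and target base algebras commute: apply `ε(· y) ⊗ id ⊗ ε(x ·)` to the two
forms of `(Δ ⊗ id)(Δ(1))` in (WBA3) and (WBA3'). -/
theorem εs_mul_εt (x y : H) : εs k H x * εt k H y = εt k H y * εs k H x := by
  let r := ℛ k (1 : H)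
  have h := (sum_comul_left_tmul r).symm.trans (sum_comul_left_tmul' r)
  have h' := congrArg ((TensorProduct.rid k H).toLinearMap ∘ₗ TensorProduct.map
    ((TensorProduct.lid k H).toLinearMap ∘ₗ (counit ∘ₗ LinearMap.mulRight k y).rTensor H)
    (counit ∘ₗ LinearMap.mulLeft k x)) h
  rw [← r.eq] at h'
  simp [Finset.sum_mul, Finset.mul_sum, sum_tmul] at h'
  simp only [εs_eq_sum r, εt_eq_sum r, Finset.sum_mul_sum, smul_mul_smul_comm]
  refine Eq.trans ?_ (h'.trans (Eq.trans ?_ Finset.sum_comm))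
  · simp only [smul_smul]
  · simp only [smul_smul, mul_comm (counit (R := k) (x * _))]

/-- `Σ x⁽¹⁾ ⊗ ε_t(x⁽²⁾) = Σ 1⁽¹⁾x ⊗ 1⁽²⁾`: multiply (WBA3') on the right by `Δ(x) ⊗ 1` and apply
`id ⊗ ε ⊗ id`. -/
theorem map_id_εt_comul (x : H) :
    TensorProduct.map LinearMap.id (εt k H) (comul (R := k) x) =
      comul (R := k) (1 : H) * (x ⊗ₜ[k] (1 : H)) := by
  let r := ℛ k (1 : H)
  have h := congrArg (TensorProduct.map
    ((TensorProduct.rid k H).toLinearMap ∘ₗ (counit (R := k) (A := H)).lTensor H ∘ₗ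
      LinearMap.mulRight k (comul (R := k) x)) LinearMap.id) (sum_comul_left_tmul r)
  simp only [map_sum, TensorProduct.map_tmul, LinearMap.comp_apply, LinearMap.mulRight_apply,
    ← WeakBialgebra.comul_mul, mul_assoc, one_mul, Coalgebra.lTensor_counit_comul] at h
  conv_rhs => rw [← r.eq]
  let q := ℛ k x
  rw [← q.eq] at h ⊢
  simp [Finset.sum_mul, Finset.mul_sum, sum_tmul, εt_eq_sum r, tmul_sum] at h ⊢
  rw [h, Finset.sum_comm]
  simp [smul_tmul]

/-- `Σ ε_s(x⁽¹⁾) ⊗ x⁽²⁾ = Σ 1⁽¹⁾ ⊗ x1⁽²⁾`, the mirror image of `map_id_εt_comul`. -/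
theorem map_εs_id_comul (x : H) :
    TensorProduct.map (εs k H) LinearMap.id (comul (R := k) x) =
      ((1 : H) ⊗ₜ[k] x) * comul (R := k) (1 : H) := by
  let r := ℛ k (1 : H)
  have h := congrArg (TensorProduct.map LinearMap.id
    ((TensorProduct.lid k H).toLinearMap ∘ₗ (counit (R := k) (A := H)).rTensor H ∘ₗ
      LinearMap.mulLeft k (comul (R := k) x))) (sum_left_tmul_comul r)
  simp only [map_sum, TensorProduct.map_tmul, LinearMap.comp_apply, LinearMap.mulLeft_apply,
    ← mul_assoc, comul_mul_one] at h
  simp only [← WeakBialgebra.comul_mul, Coalgebra.rTensor_counit_comul] at h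
  conv_rhs => rw [← r.eq]
  let q := ℛ k x
  rw [← q.eq] at h ⊢
  simp [Finset.sum_mul, Finset.mul_sum, sum_tmul, εs_eq_sum r, tmul_sum] at h ⊢
  rw [h, Finset.sum_comm]
  simp [smul_tmul]

/-- `Σ ε_s(y⁽¹⁾) ⊗ ε_t(y⁽²⁾) = Σ ε_s(y⁽²⁾) ⊗ ε_t(y⁽¹⁾)`, the dual of `εs_mul_εt`: by (WBA2) and
(WBA2'), both sides equal `Σ ε(1⁽¹⁾ y 1'⁽²⁾) 1'⁽¹⁾ ⊗ 1⁽²⁾`. -/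
theorem map_εs_εt_comul (y : H) :
    TensorProduct.map (εs k H) (εt k H) (comul (R := k) y) =
      TensorProduct.comm k H H (TensorProduct.map (εt k H) (εs k H) (comul (R := k) y)) := by
  let r := ℛ k (1 : H)
  let q := ℛ k y
  have h (i j) := (WeakBialgebra.counit_mul_mul (k := k) (r.left i) y (r.right j)).symm.trans
    (WeakBialgebra.counit_mul_mul' (k := k) (r.left i) y (r.right j))
  rw [← q.eq] at h ⊢
  have e (a b : H) : εs k H a ⊗ₜ[k] εt k H b = ∑ i ∈ r.index, ∑ j ∈ r.index,
      (counit (R := k) (r.left i * b) * counit (R := k) (a * r.right j)) •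
        (r.left j ⊗ₜ[k] r.right i) := by
    simp only [εs_eq_sum r, εt_eq_sum r, sum_tmul, tmul_sum, tmul_smul, ← smul_tmul', Finset.smul_sum,
      smul_smul]
  simp only [map_sum, TensorProduct.map_tmul, TensorProduct.comm_tmul, e]
  rw [Finset.sum_comm, Finset.sum_comm (s := q.index)]
  refine Finset.sum_congr rfl fun i _ => ?_
  rw [Finset.sum_comm, Finset.sum_comm (s := q.index)]
  refine Finset.sum_congr rfl fun j _ => ?_
  rw [← Finset.sum_smul, ← Finset.sum_smul]
  congr 1
  simpa [mul_comm] using (h i j).symm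

end WeakBialgebra

/-- A quasi-inverse `g` of `f` with `g f g = g` is determined by the products `f g` and `g f`. -/
theorem eq_of_weak_inverse {R : Type*} [Semigroup R] {f g h : R} (hfg : f * g = f * h)
    (hgf : g * f = h * f) (hg : g * f * g = g) (hh : h * f * h = h) : g = h := by
  rw [← hg, mul_assoc, hfg, ← mul_assoc, hgf, hh]

/-! ### The antipode: convolution identities, unit and counit -/

section WeakHopfAlgebra

variable [WeakHopfAlgebra k H]

theorem conv_id_mul_aS : toConv (LinearMap.id (R := k) (M := H)) * toConv (aS k H) =
    toConv (εt k H) := by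
  ext x
  exact WeakHopfAlgebra.mul_antipode x

theorem conv_aS_mul_id : toConv (aS k H) * toConv (LinearMap.id (R := k) (M := H)) =
    toConv (εs k H) := by
  ext x
  exact WeakHopfAlgebra.antipode_mul x

theorem conv_aS_mul_εt : toConv (aS k H) * toConv (εt k H) = toConv (aS k H) := by
  rw [← conv_id_mul_aS]
  ext x
  refine Eq.trans ?_ (WeakHopfAlgebra.antipode_mul_antipode x)
  rw [LinearMap.convMul_apply, ← (ℛ k x).eq]
  simp [aS, LinearMap.lTensor]

theorem conv_εs_mul_aS : toConv (εs k H) * toConv (aS k H) = toConv (aS k H) := by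
  rw [← conv_aS_mul_id, mul_assoc, conv_id_mul_aS, conv_aS_mul_εt]

/-- `S(1) = Σ S(1⁽¹⁾) 1⁽²⁾ S(1⁽³⁾)` splits by (WBA3) as `ε_s(1) ε_t(1) = 1`. -/
theorem aS_one : aS k H (1 : H) = 1 := by
  let r := ℛ k (1 : H)
  have h := r.convMul_apply (toConv (εs k H)) (toConv (aS k H))
  rw [conv_εs_mul_aS, ← conv_aS_mul_id] at h
  have e := congrArg (LinearMap.mul' k H ∘ₗ TensorProduct.map
    (LinearMap.mul' k H ∘ₗ (aS k H).rTensor H) (aS k H)) (sum_comul_left_tmul' r)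
  have hs : ∑ i ∈ r.index, aS k H (r.left i) * r.right i = 1 := by
    refine Eq.trans ?_ ((WeakHopfAlgebra.antipode_mul (k := k) 1).trans εs_one)
    rw [← r.eq]
    simp [aS]
  have ht : ∑ i ∈ r.index, r.left i * aS k H (r.right i) = 1 := by
    refine Eq.trans ?_ ((WeakHopfAlgebra.mul_antipode (k := k) 1).trans εt_one)
    rw [← r.eq]
    simp [aS]
  refine h.trans (Eq.trans ?_ (e.trans ?_))
  · simp [LinearMap.rTensor]
  · rw [← r.eq]
    simp only [Finset.sum_mul, Algebra.TensorProduct.tmul_mul_tmul, mul_one, map_sum,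
      LinearMap.comp_apply, TensorProduct.map_tmul, LinearMap.rTensor_tmul,
      LinearMap.mul'_apply, ← mul_assoc]
    simp only [← Finset.sum_mul, hs, one_mul, ht]

/-- `ε(S(x)) = Σ ε(S(x⁽¹⁾) ε_t(x⁽²⁾)) = Σ ε(S(x⁽¹⁾) x⁽²⁾) = ε(ε_s(x)) = ε(x)`. -/
theorem counit_aS (x : H) : counit (R := k) (aS k H x) = counit (R := k) x := by
  have h (f : H →ₗ[k] H) := (ℛ k x).convMul_apply (toConv (aS k H)) (toConv f)
  have h1 := congrArg (counit (R := k)) (h (εt k H))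
  have h2 := congrArg (counit (R := k)) (h LinearMap.id)
  rw [conv_aS_mul_εt] at h1
  rw [conv_aS_mul_id] at h2
  simp only [map_sum, counit_mul_εt] at h1 h2
  refine h1.trans (Eq.trans ?_ (h2.symm.trans ?_))
  · simp
  · simpa using counit_εs_mul (k := k) x 1

/-! ### Compatibility of the antipode with comultiplication -/

/-- The map `x ↦ f(x) ⊗ 1`, as an element of the convolution algebra `Hom(H, H ⊗ H)`. -/
noncomputable def inclLeft (f : H →ₗ[k] H) : WithConv (H →ₗ[k] H ⊗[k] H) :=
  toConv ((Algebra.TensorProduct.includeLeft : H →ₐ[k] H ⊗[k] H).toLinearMap ∘ₗ f)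

/-- The map `x ↦ 1 ⊗ f(x)`, as an element of the convolution algebra `Hom(H, H ⊗ H)`. -/
noncomputable def inclRight (f : H →ₗ[k] H) : WithConv (H →ₗ[k] H ⊗[k] H) :=
  toConv ((Algebra.TensorProduct.includeRight : H →ₐ[k] H ⊗[k] H).toLinearMap ∘ₗ f)

/-- `f ↦ f ⊗ 1` respects convolution, as it is composition with an algebra homomorphism. -/
theorem inclLeft_mul {f g h : H →ₗ[k] H} (e : toConv f * toConv g = toConv h) :
    inclLeft f * inclLeft g = inclLeft h := by
  have := LinearMap.algHom_comp_convMul_distrib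
    (Algebra.TensorProduct.includeLeft : H →ₐ[k] H ⊗[k] H) (toConv f) (toConv g)
  rw [e] at this
  exact (congrArg toConv this).symm

theorem inclRight_mul {f g h : H →ₗ[k] H} (e : toConv f * toConv g = toConv h) :
    inclRight f * inclRight g = inclRight h := by
  have := LinearMap.algHom_comp_convMul_distrib
    (Algebra.TensorProduct.includeRight : H →ₐ[k] H ⊗[k] H) (toConv f) (toConv g)
  rw [e] at this
  exact (congrArg toConv this).symm

theorem inclLeft_mul_inclRight (f g : H →ₗ[k] H) :
    inclLeft f * inclRight g = toConv (TensorProduct.map f g ∘ₗ comul) := by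
  ext x
  rw [(ℛ k x).convMul_apply]
  change _ = TensorProduct.map f g (comul x)
  rw [← (ℛ k x).eq]
  simp [inclLeft, inclRight]

theorem inclRight_mul_inclLeft (f g : H →ₗ[k] H) :
    inclRight f * inclLeft g =
      toConv (TensorProduct.map g f ∘ₗ (TensorProduct.comm k H H).toLinearMap ∘ₗ comul) := by
  ext x
  rw [(ℛ k x).convMul_apply]
  change _ = TensorProduct.map g f (TensorProduct.comm k H H (comul x))
  rw [← (ℛ k x).eq]
  simp [inclLeft, inclRight]

theorem conv_mulLeft (a : H ⊗[k] H) (f g : WithConv (H →ₗ[k] H ⊗[k] H)) :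
    toConv (LinearMap.mulLeft k a ∘ₗ f.ofConv) * g =
      toConv (LinearMap.mulLeft k a ∘ₗ (f * g).ofConv) := by
  ext x
  change _ = a * (f * g) x
  rw [(ℛ k x).convMul_apply, (ℛ k x).convMul_apply]
  simp [Finset.mul_sum, mul_assoc]

theorem conv_mulRight (a : H ⊗[k] H) (f g : WithConv (H →ₗ[k] H ⊗[k] H)) :
    f * toConv (LinearMap.mulRight k a ∘ₗ g.ofConv) =
      toConv (LinearMap.mulRight k a ∘ₗ (f * g).ofConv) := by
  ext x
  change _ = (f * g) x * a
  rw [(ℛ k x).convMul_apply, (ℛ k x).convMul_apply]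
  simp [Finset.sum_mul, mul_assoc]

theorem conv_comul_comp (f g : H →ₗ[k] H) :
    toConv (comul (R := k) ∘ₗ f) * toConv (comul (R := k) ∘ₗ g) =
      toConv (comul (R := k) ∘ₗ (toConv f * toConv g).ofConv) := by
  ext x
  change _ = comul (R := k) ((toConv f * toConv g) x)
  rw [(ℛ k x).convMul_apply, (ℛ k x).convMul_apply]
  simp [WeakBialgebra.comul_mul]

/-- `Δ ∘ S` and `x ↦ Σ S(x⁽²⁾) ⊗ S(x⁽¹⁾)` are both quasi-inverse to `Δ` in `Hom(H, H ⊗ H)`, with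
products `Δ ∘ ε_t` and `Δ ∘ ε_s`. -/
theorem comul_aS : comul (R := k) ∘ₗ aS k H =
    TensorProduct.map (aS k H) (aS k H) ∘ₗ (TensorProduct.comm k H H).toLinearMap ∘ₗ comul := by
  have hΔ : inclLeft LinearMap.id * inclRight LinearMap.id =
      toConv (comul (R := k) (A := H) ∘ₗ LinearMap.id) := by
    rw [inclLeft_mul_inclRight]; simp
  have ht : inclLeft LinearMap.id * inclRight (εt k H) = toConv (LinearMap.mulLeft k
      (comul (R := k) (1 : H)) ∘ₗ (inclLeft (LinearMap.id (R := k) (M := H))).ofConv) := by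
    rw [inclLeft_mul_inclRight]
    ext x
    exact map_id_εt_comul x
  have hs : inclLeft (εs k H) * inclRight LinearMap.id = toConv (LinearMap.mulRight k
      (comul (R := k) (1 : H)) ∘ₗ (inclRight (LinearMap.id (R := k) (M := H))).ofConv) := by
    rw [inclLeft_mul_inclRight]
    ext x
    exact map_εs_id_comul x
  have hst : inclLeft (εs k H) * inclRight (εt k H) = inclRight (εt k H) * inclLeft (εs k H) := by
    rw [inclLeft_mul_inclRight, inclRight_mul_inclLeft]
    ext x
    refine (map_εs_εt_comul x).trans ?_
    exact (TensorProduct.map_comm _ _ _).symm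
  have hidS := inclLeft_mul (conv_id_mul_aS (k := k) (H := H))
  have hSid := inclLeft_mul (conv_aS_mul_id (k := k) (H := H))
  have hidS' := inclRight_mul (conv_id_mul_aS (k := k) (H := H))
  have hSid' := inclRight_mul (conv_aS_mul_id (k := k) (H := H))
  have hεsS := inclLeft_mul (conv_εs_mul_aS (k := k) (H := H))
  have hSεt := inclRight_mul (conv_aS_mul_εt (k := k) (H := H))
  apply toConv_injective
  rw [← inclRight_mul_inclLeft]
  apply eq_of_weak_inverse (f := toConv (comul (R := k) (A := H) ∘ₗ LinearMap.id))
  · rw [conv_comul_comp, conv_id_mul_aS, ← hΔ, mul_assoc, ← mul_assoc (inclRight (LinearMap.id (R := k) (M := H))), hidS',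
      ← mul_assoc, ht, conv_mulLeft, hidS]
    ext x
    exact comul_εt x
  · rw [conv_comul_comp, conv_aS_mul_id, ← hΔ, mul_assoc, ← mul_assoc (inclLeft (aS k H)), hSid,
      hs, conv_mulRight, hSid']
    ext x
    exact comul_εs x
  · rw [conv_comul_comp, conv_comul_comp, conv_aS_mul_id]
    exact congrArg (fun f => toConv (comul (R := k) (A := H) ∘ₗ f.ofConv)) conv_εs_mul_aS
  · rw [← hΔ]
    calc _ = inclRight (aS k H) * ((inclLeft (aS k H) * inclLeft LinearMap.id) *
          (inclRight LinearMap.id * inclRight (aS k H))) * inclLeft (aS k H) := by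
            simp only [mul_assoc]
      _ = (inclRight (aS k H) * inclRight (εt k H)) * (inclLeft (εs k H) * inclLeft (aS k H)) := by
            rw [hSid, hidS', hst]; simp only [mul_assoc]
      _ = _ := by rw [hSεt, hεsS]

/-! ### Compatibility of the antipode with multiplication -/

/-- The map `x ⊗ y ↦ ε(y) f(x)`, as an element of the convolution algebra `Hom(H ⊗ H, H)`. -/
noncomputable def projLeft (f : H →ₗ[k] H) : WithConv (H ⊗[k] H →ₗ[k] H) :=
  toConv (f ∘ₗ (TensorProduct.rid k H).toLinearMap ∘ₗ (counit (R := k) (A := H)).lTensor H)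

/-- The map `x ⊗ y ↦ ε(x) f(y)`, as an element of the convolution algebra `Hom(H ⊗ H, H)`. -/
noncomputable def projRight (f : H →ₗ[k] H) : WithConv (H ⊗[k] H →ₗ[k] H) :=
  toConv (f ∘ₗ (TensorProduct.lid k H).toLinearMap ∘ₗ (counit (R := k) (A := H)).rTensor H)

theorem conv_tmul (F G : WithConv (H ⊗[k] H →ₗ[k] H)) (x y : H) {ι κ : Type*}
    (r : Repr k x ι) (q : Repr k y κ) : (F * G) (x ⊗ₜ[k] y) = ∑ i ∈ r.index, ∑ j ∈ q.index,
      F (r.left i ⊗ₜ[k] q.left j) * G (r.right i ⊗ₜ[k] q.right j) := by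
  rw [LinearMap.convMul_apply, TensorProduct.comul_tmul, ← r.eq, ← q.eq]
  simp [sum_tmul, tmul_sum]
  exact Finset.sum_comm

theorem sum_counit_smul_left {x : H} {ι : Type*} (r : Repr k x ι) :
    ∑ i ∈ r.index, counit (R := k) (r.right i) • r.left i = x := by
  have := congrArg (TensorProduct.rid k H) (sum_tmul_counit_eq r)
  simpa only [map_sum, TensorProduct.rid_tmul, one_mul, one_smul] using this

theorem conv_mul_projLeft (F : WithConv (H ⊗[k] H →ₗ[k] H)) (f : H →ₗ[k] H) (x y : H) {ι : Type*}
    (r : Repr k x ι) : (F * projLeft f) (x ⊗ₜ[k] y) =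
      ∑ i ∈ r.index, F (r.left i ⊗ₜ[k] y) * f (r.right i) := by
  rw [conv_tmul F _ x y r (ℛ k y)]
  refine Finset.sum_congr rfl fun i _ => ?_
  conv_rhs => rw [← sum_counit_smul_left (ℛ k y)]
  simp [projLeft, tmul_sum, Finset.sum_mul]

theorem conv_projRight_mul (F : WithConv (H ⊗[k] H →ₗ[k] H)) (f : H →ₗ[k] H) (x y : H) {ι : Type*}
    (q : Repr k y ι) : (projRight f * F) (x ⊗ₜ[k] y) =
      ∑ j ∈ q.index, f (q.left j) * F (x ⊗ₜ[k] q.right j) := by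
  rw [conv_tmul _ F x y (ℛ k x) q, Finset.sum_comm]
  refine Finset.sum_congr rfl fun i _ => ?_
  conv_rhs => rw [← sum_counit_smul (ℛ k x)]
  simp [projRight, sum_tmul, Finset.mul_sum, ← smul_tmul']

/-- `projLeft` respects convolution, as it is composition with the coalgebra map `id ⊗ ε`. -/
theorem projLeft_mul {f g h : H →ₗ[k] H} (e : toConv f * toConv g = toConv h) :
    projLeft f * projLeft g = projLeft h := by
  ext x y
  change (projLeft f * projLeft g) (x ⊗ₜ[k] y) = _
  rw [conv_mul_projLeft _ _ x y (ℛ k x)]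
  have h2 := (ℛ k x).convMul_apply (toConv f) (toConv g)
  rw [e] at h2
  simp [projLeft] at h2 ⊢
  rw [h2, Finset.smul_sum]

theorem projRight_mul {f g h : H →ₗ[k] H} (e : toConv f * toConv g = toConv h) :
    projRight f * projRight g = projRight h := by
  ext x y
  change (projRight f * projRight g) (x ⊗ₜ[k] y) = _
  rw [conv_projRight_mul _ _ x y (ℛ k y)]
  have h2 := (ℛ k y).convMul_apply (toConv f) (toConv g)
  rw [e] at h2
  simp [projRight] at h2 ⊢
  rw [h2, Finset.smul_sum]

theorem projLeft_mul_projRight (f g : H →ₗ[k] H) :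
    projLeft f * projRight g = toConv (LinearMap.mul' k H ∘ₗ TensorProduct.map f g) := by
  ext x y
  change (projLeft f * projRight g) (x ⊗ₜ[k] y) = f x * g y
  rw [conv_tmul _ _ x y (ℛ k x) (ℛ k y)]
  conv_rhs => rw [← sum_counit_smul_left (ℛ k x), ← sum_counit_smul (ℛ k y)]
  simp only [map_sum, map_smul, Finset.sum_mul_sum]
  refine Finset.sum_congr rfl fun i _ => Finset.sum_congr rfl fun j _ => ?_
  simp [projLeft, projRight, smul_smul, mul_comm]

theorem projRight_mul_projLeft (f g : H →ₗ[k] H) :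
    projRight f * projLeft g = toConv (LinearMap.mul' k H ∘ₗ TensorProduct.map f g ∘ₗ
      (TensorProduct.comm k H H).toLinearMap) := by
  ext x y
  change (projRight f * projLeft g) (x ⊗ₜ[k] y) = f y * g x
  rw [conv_mul_projLeft _ _ x y (ℛ k x)]
  conv_rhs => rw [← sum_counit_smul (ℛ k x)]
  simp [projRight, Finset.mul_sum]

theorem conv_comp_mul (f g : H →ₗ[k] H) :
    toConv (f ∘ₗ LinearMap.mul' k H) * toConv (g ∘ₗ LinearMap.mul' k H) =
      toConv ((toConv f * toConv g).ofConv ∘ₗ LinearMap.mul' k H) := by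
  ext x y
  change (toConv (f ∘ₗ LinearMap.mul' k H) * toConv (g ∘ₗ LinearMap.mul' k H)) (x ⊗ₜ[k] y) =
    (toConv f * toConv g) (x * y)
  rw [conv_tmul _ _ x y (ℛ k x) (ℛ k y), LinearMap.convMul_apply, WeakBialgebra.comul_mul]
  conv_rhs => rw [← (ℛ k x).eq, ← (ℛ k y).eq]
  simp [Finset.sum_mul, Finset.mul_sum]
  exact Finset.sum_comm

/-- With `m` the multiplication, `S ∘ m` and `x ⊗ y ↦ S(y)S(x)` are both quasi-inverse to `m` in
`Hom(H ⊗ H, H)`, with products `ε_t ∘ m` and `ε_s ∘ m`. -/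
theorem aS_comp_mul : aS k H ∘ₗ LinearMap.mul' k H = LinearMap.mul' k H ∘ₗ
    TensorProduct.map (aS k H) (aS k H) ∘ₗ (TensorProduct.comm k H H).toLinearMap := by
  have hm : projLeft LinearMap.id * projRight LinearMap.id =
      toConv (LinearMap.id ∘ₗ LinearMap.mul' k H) := by
    rw [projLeft_mul_projRight]; simp
  have hst : projLeft (εs k H) * projRight (εt k H) = projRight (εt k H) * projLeft (εs k H) := by
    rw [projLeft_mul_projRight, projRight_mul_projLeft]
    ext x y
    exact εs_mul_εt x y
  have hidS' := projRight_mul (conv_id_mul_aS (k := k) (H := H))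
  have hSid := projLeft_mul (conv_aS_mul_id (k := k) (H := H))
  have hεsS := projLeft_mul (conv_εs_mul_aS (k := k) (H := H))
  have hSεt := projRight_mul (conv_aS_mul_εt (k := k) (H := H))
  apply toConv_injective
  rw [← projRight_mul_projLeft]
  apply eq_of_weak_inverse (f := toConv (LinearMap.id ∘ₗ LinearMap.mul' k H))
  · rw [conv_comp_mul, conv_id_mul_aS, ← hm, mul_assoc, ← mul_assoc (projRight (LinearMap.id (R := k) (M := H))), hidS',
      ← mul_assoc]
    ext x y
    change εt k H (x * y) = (projLeft (LinearMap.id (R := k) (M := H)) * projRight (εt k H) * projLeft (aS k H))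
      (x ⊗ₜ[k] y)
    rw [conv_mul_projLeft _ _ x y (ℛ k x), projLeft_mul_projRight, ← εt_mul_εt]
    refine (WeakHopfAlgebra.mul_antipode (x * εt k H y)).symm.trans ?_
    rw [comul_mul_εt, ← (ℛ k x).eq]
    simp [aS, Finset.sum_mul]
  · rw [conv_comp_mul, conv_aS_mul_id, ← hm, mul_assoc, ← mul_assoc (projLeft (aS k H)), hSid]
    ext x y
    change εs k H (x * y) = (projRight (aS k H) * (projLeft (εs k H) * projRight (LinearMap.id (R := k) (M := H))))
      (x ⊗ₜ[k] y)
    rw [conv_projRight_mul _ _ x y (ℛ k y), projLeft_mul_projRight, ← εs_εs_mul]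
    refine (WeakHopfAlgebra.antipode_mul (εs k H x * y)).symm.trans ?_
    rw [comul_εs_mul, ← (ℛ k y).eq]
    simp [aS, Finset.mul_sum]
  · rw [conv_comp_mul, conv_comp_mul, conv_aS_mul_id]
    exact congrArg (fun f => toConv (f.ofConv ∘ₗ LinearMap.mul' k H)) conv_εs_mul_aS
  · rw [← hm]
    calc _ = projRight (aS k H) * ((projLeft (aS k H) * projLeft LinearMap.id) *
          (projRight LinearMap.id * projRight (aS k H))) * projLeft (aS k H) := by
            simp only [mul_assoc]
      _ = (projRight (aS k H) * projRight (εt k H)) * (projLeft (εs k H) * projLeft (aS k H)) := by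
            rw [hSid, hidS', hst]; simp only [mul_assoc]
      _ = _ := by rw [hSεt, hεsS]

end WeakHopfAlgebra

end AntipodeProof

/-- The antipode of a weak Hopf algebra over a field is an algebra
antihomomorphism and a coalgebra antihomomorphism: `S(xy) = S(y)S(x)`, `S(1) = 1`,
`Δ(S(x)) = Σ S(x⁽²⁾) ⊗ S(x⁽¹⁾)` and `ε(S(x)) = ε(x)`. -/
theorem antipode_antihomomorphism [WeakHopfAlgebra k H] :
    (∀ x y : H, aS k H (x * y) = aS k H y * aS k H x) ∧
    (aS k H (1 : H) = 1) ∧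
    (∀ x : H, Coalgebra.comul (R := k) (aS k H x) =
      (TensorProduct.map (aS k H) (aS k H))
        ((TensorProduct.comm k H H) (Coalgebra.comul (R := k) x))) ∧
    (∀ x : H, Coalgebra.counit (R := k) (aS k H x) = Coalgebra.counit (R := k) x) := by
  refine ⟨fun x y => ?_, aS_one, fun x => ?_, counit_aS⟩
  · simpa using LinearMap.congr_fun (aS_comp_mul (k := k) (H := H)) (x ⊗ₜ[k] y)
  · exact LinearMap.congr_fun (comul_aS (k := k) (H := H)) x
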